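/- arXiv:2401.15728 — 3 statements merged into one kernel-verified Lean document; each statement's English description precedes it below -/
import Mathlib

section
/- Let t ≤ T₁ ≤ u be real numbers with Σ_rr(t,T₁) > 0, let γ₁ > 0, and let c, y ∈ ℝ. Then ∫_ℝ exp( (1/2)γ₁² Σ_rr(T₁,u) ) · sinh( γ₁·( φ_r(T₁,u)·η + c ) ) · N(η; φ_r(t,T₁)·y, Σ_rr(t,T₁)) dη = exp( (1/2)γ₁² Σ_rr(t,u) ) · sinh( γ₁·( φ_r(t,u)·y + c ) ). In particular, Gaussian averaging of the smile-adjusted sinh short-rate factor over the interval [t,T₁] converts the dispersion factor ψ based on Σ_rr(T₁,u) into the one based on Σ_rr(t,u). -/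
open MeasureTheory Real

/-- Mean reversion factor `φ_r(t,v) = exp(−∫_t^v α)`. -/
noncomputable def phiR (α : ℝ → ℝ) (t v : ℝ) : ℝ := Real.exp (-(∫ u in t..v, α u))

/-- Variance of the short-rate factor `Σ_rr(t,v)`. -/
noncomputable def Srr (α σ : ℝ → ℝ) (t v : ℝ) : ℝ := ∫ u in t..v, (phiR α u v) ^ 2 * (σ u) ^ 2

/-- Smile dispersion factor `ψ_r(t,v)`. -/
noncomputable def psiR (α σ γ : ℝ → ℝ) (t v : ℝ) : ℝ :=
  Real.exp ((1 / 2) * (γ v) ^ 2 * Srr α σ t v)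

/-- Rate–integral covariance `Σ_rz(t,v)`. -/
noncomputable def Srz (α σ γ : ℝ → ℝ) (t v : ℝ) : ℝ :=
  ∫ u in t..v, psiR α σ γ t u * phiR α u v * Srr α σ t u

/-- Variance of the compounding variable `Σ_zz(t,v)`. -/
noncomputable def Szz (α σ γ : ℝ → ℝ) (t v : ℝ) : ℝ :=
  2 * ∫ u in t..v, psiR α σ γ t u * Srz α σ γ t u

/-- `B*(t,v) = ∫_t^v ψ_r(t,u) φ_r(t,u) du`. -/
noncomputable def Bstar (α σ γ : ℝ → ℝ) (t v : ℝ) : ℝ :=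
  ∫ u in t..v, psiR α σ γ t u * phiR α t u

/-- Drift of the compounding variable `μ*(y,t,v)`. -/
noncomputable def muStar (α σ γ : ℝ → ℝ) (y t v : ℝ) : ℝ :=
  Bstar α σ γ t v * (y + Srz α σ γ 0 t) + (1 / 2) * (Bstar α σ γ t v) ^ 2 * Srr α σ 0 t

/-- One-dimensional Gaussian density with mean `m` and variance `s`. -/
noncomputable def gauss (x m s : ℝ) : ℝ :=
  (Real.sqrt (2 * Real.pi * s))⁻¹ * Real.exp (-(x - m) ^ 2 / (2 * s))

/-- Centered bivariate Gaussian density with covariance `!![srr, srz; srz, szz]` at `(a, b)`. -/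
noncomputable def gauss2 (a b srr srz szz : ℝ) : ℝ :=
  (2 * Real.pi * Real.sqrt (srr * szz - srz ^ 2))⁻¹ *
    Real.exp (-(szz * a ^ 2 - 2 * srz * a * b + srr * b ^ 2) / (2 * (srr * szz - srz ^ 2)))

/-- The leading-order (Hull–White) Green's function `G₀`. -/
noncomputable def G0 (α σ γ : ℝ → ℝ) (y z t η ζ v : ℝ) : ℝ :=
  gauss2 (η - phiR α t v * y) (ζ - z - muStar α σ γ y t v)
    (Srr α σ t v) (Srz α σ γ t v) (Szz α σ γ t v)

/-!
`exp (γ² s / 2) * sinh (γ (x + c))` solves the heat equation `∂ₛ = ½ ∂ₓₓ`, so averaging it against a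
Gaussian of variance `v` in `x` replaces `s` by `s + v`. The rate at `u` is `φ_r(T₁,u)` times the
rate at `T₁` plus independent noise: means compose because `φ_r` is multiplicative in time, and
`Σ_rr(t,u) = φ_r(T₁,u)² Σ_rr(t,T₁) + Σ_rr(T₁,u)`.
-/

section Gaussian

open ProbabilityTheory
open scoped NNReal

lemma gauss_eq_gaussianPDFReal (x m : ℝ) (v : ℝ≥0) : gauss x m v = gaussianPDFReal m v x :=
  rfl

lemma integral_mul_gauss (f : ℝ → ℝ) (m : ℝ) {v : ℝ≥0} (hv : v ≠ 0) :
    ∫ x, f x * gauss x m v = ∫ x, f x ∂gaussianReal m v := by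
  simp only [integral_gaussianReal_eq_integral_smul hv, gauss_eq_gaussianPDFReal, smul_eq_mul,
    mul_comm]

lemma integrable_exp_affine_gaussianReal (m : ℝ) (v : ℝ≥0) (a b : ℝ) :
    Integrable (fun x ↦ exp (a * x + b)) (gaussianReal m v) := by
  simpa only [exp_add] using (integrable_exp_mul_gaussianReal a).mul_const (exp b)

lemma integral_exp_affine_gaussianReal (m : ℝ) (v : ℝ≥0) (a b : ℝ) :
    ∫ x, exp (a * x + b) ∂gaussianReal m v = exp (a ^ 2 * v / 2) * exp (a * m + b) := by
  have mgf_eq : ∫ x, exp (a * x) ∂gaussianReal m v = exp (m * a + v * a ^ 2 / 2) :=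
    congrFun mgf_id_gaussianReal a
  simp only [exp_add, integral_mul_const, mgf_eq]
  ring_nf

lemma integral_sinh_affine_gaussianReal (m : ℝ) (v : ℝ≥0) (a b : ℝ) :
    ∫ x, sinh (a * x + b) ∂gaussianReal m v = exp (a ^ 2 * v / 2) * sinh (a * m + b) := by
  have neg_affine (x : ℝ) : -(a * x + b) = -a * x + -b := by ring
  simp only [sinh_eq, neg_affine]
  rw [integral_div, integral_sub (integrable_exp_affine_gaussianReal m v a b)
    (integrable_exp_affine_gaussianReal m v (-a) (-b)), integral_exp_affine_gaussianReal,
    integral_exp_affine_gaussianReal, neg_sq]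
  ring

lemma integral_sinh_affine_mul_gauss (a b m : ℝ) {s : ℝ} (hs : 0 < s) :
    ∫ x, sinh (a * x + b) * gauss x m s = exp (a ^ 2 * s / 2) * sinh (a * m + b) := by
  lift s to ℝ≥0 using hs.le
  rw [integral_mul_gauss _ m (NNReal.coe_pos.mp hs).ne', integral_sinh_affine_gaussianReal]

end Gaussian

section ShortRate

variable {α σ : ℝ → ℝ} {a b c : ℝ}

lemma phiR_mul_phiR (hab : IntervalIntegrable α volume a b)
    (hbc : IntervalIntegrable α volume b c) : phiR α a b * phiR α b c = phiR α a c := by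
  rw [phiR, phiR, phiR, ← exp_add, ← neg_add,
    intervalIntegral.integral_add_adjacent_intervals hab hbc]

lemma continuousOn_phiR_left (hα : IntervalIntegrable α volume a b) :
    ContinuousOn (fun s ↦ phiR α s b) (Set.uIcc a b) :=
  (intervalIntegral.continuousOn_primitive_interval_left
    ((intervalIntegrable_iff').mp hα)).neg.rexp

lemma intervalIntegrable_phiR_sq_mul_sq (hα : IntervalIntegrable α volume a b)
    (hσ : IntervalIntegrable (fun s ↦ σ s ^ 2) volume a b) :
    IntervalIntegrable (fun s ↦ phiR α s b ^ 2 * σ s ^ 2) volume a b :=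
  hσ.continuousOn_mul ((continuousOn_phiR_left hα).pow 2)

lemma eqOn_phiR_sq_mul_sq (hab : IntervalIntegrable α volume a b)
    (hbc : IntervalIntegrable α volume b c) :
    Set.EqOn (fun s ↦ phiR α b c ^ 2 * (phiR α s b ^ 2 * σ s ^ 2))
      (fun s ↦ phiR α s c ^ 2 * σ s ^ 2) (Set.uIcc a b) := by
  intro s hs
  have hsb : IntervalIntegrable α volume s b := hab.mono_set (Set.uIcc_subset_uIcc_right hs)
  simp only [← phiR_mul_phiR hsb hbc]
  ring

lemma Srr_eq_phiR_sq_mul_Srr_add_Srr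
    (hαab : IntervalIntegrable α volume a b) (hαbc : IntervalIntegrable α volume b c)
    (hσab : IntervalIntegrable (fun s ↦ σ s ^ 2) volume a b)
    (hσbc : IntervalIntegrable (fun s ↦ σ s ^ 2) volume b c) :
    Srr α σ a c = phiR α b c ^ 2 * Srr α σ a b + Srr α σ b c := by
  have eqOn := eqOn_phiR_sq_mul_sq (σ := σ) hαab hαbc
  have integrable_ab : IntervalIntegrable (fun s ↦ phiR α s c ^ 2 * σ s ^ 2) volume a b :=
    ((intervalIntegrable_phiR_sq_mul_sq hαab hσab).const_mul _).congr
      (eqOn.mono Set.uIoc_subset_uIcc)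
  calc Srr α σ a c
    _ = (∫ s in a..b, phiR α s c ^ 2 * σ s ^ 2) + Srr α σ b c :=
      (intervalIntegral.integral_add_adjacent_intervals integrable_ab
        (intervalIntegrable_phiR_sq_mul_sq hαbc hσbc)).symm
    _ = phiR α b c ^ 2 * Srr α σ a b + Srr α σ b c := by
      rw [← intervalIntegral.integral_congr eqOn, intervalIntegral.integral_const_mul, ← Srr]

theorem gaussian_average_sinh_general {t T₁ u : ℝ}
    (hα₁ : IntervalIntegrable α volume t T₁) (hα₂ : IntervalIntegrable α volume T₁ u)
    (hσ₁ : IntervalIntegrable (fun s ↦ σ s ^ 2) volume t T₁)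
    (hσ₂ : IntervalIntegrable (fun s ↦ σ s ^ 2) volume T₁ u)
    (hrr : 0 < Srr α σ t T₁) (γ₁ c y : ℝ) :
    ∫ η : ℝ, exp ((1 / 2) * γ₁ ^ 2 * Srr α σ T₁ u) * sinh (γ₁ * (phiR α T₁ u * η + c)) *
        gauss η (phiR α t T₁ * y) (Srr α σ t T₁) =
      exp ((1 / 2) * γ₁ ^ 2 * Srr α σ t u) * sinh (γ₁ * (phiR α t u * y + c)) := by
  have affine (η : ℝ) :
      γ₁ * (phiR α T₁ u * η + c) = γ₁ * phiR α T₁ u * η + γ₁ * c := by ring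
  have mean : γ₁ * phiR α T₁ u * (phiR α t T₁ * y) + γ₁ * c = γ₁ * (phiR α t u * y + c) := by
    rw [← phiR_mul_phiR hα₁ hα₂]
    ring
  have variance : (1 / 2) * γ₁ ^ 2 * Srr α σ T₁ u + (γ₁ * phiR α T₁ u) ^ 2 * Srr α σ t T₁ / 2 =
      (1 / 2) * γ₁ ^ 2 * Srr α σ t u := by
    rw [Srr_eq_phiR_sq_mul_Srr_add_Srr hα₁ hα₂ hσ₁ hσ₂]
    ring
  simp only [affine, mul_assoc (exp _)]
  rw [integral_const_mul, integral_sinh_affine_mul_gauss _ _ _ hrr, ← mul_assoc, ← exp_add,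
    variance, mean]

end ShortRate

theorem gaussian_average_sinh (α σ : ℝ → ℝ)
    (hα : Continuous α) (hσc : Continuous σ)
    (t T₁ u : ℝ) (ht : t ≤ T₁) (hu : T₁ ≤ u)
    (hrr : 0 < Srr α σ t T₁) (γ₁ : ℝ) (hγ : 0 < γ₁) (c y : ℝ) :
    (∫ η : ℝ,
        Real.exp ((1 / 2) * γ₁ ^ 2 * Srr α σ T₁ u) *
          Real.sinh (γ₁ * (phiR α T₁ u * η + c)) *
          gauss η (phiR α t T₁ * y) (Srr α σ t T₁))
      = Real.exp ((1 / 2) * γ₁ ^ 2 * Srr α σ t u) *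
          Real.sinh (γ₁ * (phiR α t u * y + c)) := by
  exact gaussian_average_sinh_general (hα.intervalIntegrable t T₁) (hα.intervalIntegrable T₁ u)
    ((hσc.pow 2).intervalIntegrable t T₁) ((hσc.pow 2).intervalIntegrable T₁ u) hrr γ₁ c y
end

section
/- Fix t ≤ T₁ < T₂ with Σ_rr(t,T₁) > 0, and let D > 0, y ∈ ℝ. Define V_C(t,T₁,T₂) := B*(T₁,T₂)² Σ_rr(t,T₁) + Σ_zz(T₁,T₂). Then the second valuation stage of the Hull–White (zeroth-order) 3M SOFR futures price satisfies: ∫_ℝ ( exp( μ*(η,T₁,T₂) + (1/2)Σ_zz(T₁,T₂) )/D − 1 ) · N(η; φ_r(t,T₁)·y, Σ_rr(t,T₁)) dη = exp( μ*( φ_r(t,T₁)·y, T₁, T₂ ) + (1/2)V_C(t,T₁,T₂) ) / D − 1. -/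
open MeasureTheory Real

/-- The total variance `V_C(t,T₁,T₂) = B*(T₁,T₂)² Σ_rr(t,T₁) + Σ_zz(T₁,T₂)`. -/
noncomputable def VC (α σ γ : ℝ → ℝ) (t T₁ T₂ : ℝ) : ℝ :=
  (Bstar α σ γ T₁ T₂) ^ 2 * Srr α σ t T₁ + Szz α σ γ T₁ T₂

/-!
The drift `μ*(η, T₁, T₂)` is affine in `η` with slope `B*(T₁, T₂)`, so the expectation is, up to
constants, the moment generating function of a Gaussian evaluated at `B*(T₁, T₂)`. Its quadratic
term `B*(T₁, T₂)² Σ_rr(t, T₁) / 2` is what turns `Σ_zz(T₁, T₂)` into `V_C(t, T₁, T₂)`.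
-/

open ProbabilityTheory

theorem integral_mul_gauss_eq_integral_gaussianReal (f : ℝ → ℝ) (m : ℝ) {s : ℝ} (hs : 0 < s) :
    ∫ x, f x * gauss x m s = ∫ x, f x ∂gaussianReal m s.toNNReal := by
  lift s to NNReal using hs.le
  have hs_ne : s ≠ 0 := (NNReal.coe_pos.mp hs).ne'
  rw [Real.toNNReal_coe, integral_gaussianReal_eq_integral_smul hs_ne]
  exact integral_congr_ae (.of_forall fun x ↦ mul_comm (f x) (gauss x m s))

theorem muStar_eq_add_bstar_mul_sub (α σ γ : ℝ → ℝ) (y y₀ t v : ℝ) :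
    muStar α σ γ y t v = muStar α σ γ y₀ t v + Bstar α σ γ t v * (y - y₀) := by
  unfold muStar
  ring

theorem exp_muStar_add_eq_mul (α σ γ : ℝ → ℝ) (y y₀ t v a : ℝ) :
    Real.exp (muStar α σ γ y t v + a) =
      Real.exp (muStar α σ γ y₀ t v + a - Bstar α σ γ t v * y₀) *
        Real.exp (Bstar α σ γ t v * y) := by
  rw [muStar_eq_add_bstar_mul_sub α σ γ y y₀, ← Real.exp_add]
  ring_nf

theorem integrable_exp_muStar_add_gaussianReal (α σ γ : ℝ → ℝ) (t v a m : ℝ) (s : NNReal) :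
    Integrable (fun y ↦ Real.exp (muStar α σ γ y t v + a)) (gaussianReal m s) := by
  simp_rw [exp_muStar_add_eq_mul α σ γ _ m]
  exact (integrable_exp_mul_gaussianReal _).const_mul _

theorem integral_exp_muStar_add_gaussianReal (α σ γ : ℝ → ℝ) (t v a m : ℝ) (s : NNReal) :
    ∫ y, Real.exp (muStar α σ γ y t v + a) ∂gaussianReal m s =
      Real.exp (muStar α σ γ m t v + a + Bstar α σ γ t v ^ 2 * s / 2) := by
  set b := Bstar α σ γ t v with hb
  have hmgf : ∫ y, Real.exp (b * y) ∂gaussianReal m s = Real.exp (m * b + s * b ^ 2 / 2) :=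
    congrFun mgf_id_gaussianReal b
  simp_rw [exp_muStar_add_eq_mul α σ γ _ m, ← hb]
  rw [integral_const_mul, hmgf, ← Real.exp_add]
  ring_nf

theorem sofr_3M_second_stage_HW_general (α σ γ : ℝ → ℝ) (t T₁ T₂ c y : ℝ)
    (hrr : 0 < Srr α σ t T₁) :
    ∫ η, (c * Real.exp (muStar α σ γ η T₁ T₂ + (1 / 2) * Szz α σ γ T₁ T₂) - 1) *
          gauss η (phiR α t T₁ * y) (Srr α σ t T₁) =
      c * Real.exp (muStar α σ γ (phiR α t T₁ * y) T₁ T₂ + (1 / 2) * VC α σ γ t T₁ T₂) - 1 := by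
  set m := phiR α t T₁ * y
  set a := (1 / 2) * Szz α σ γ T₁ T₂ with ha
  have hint := integrable_exp_muStar_add_gaussianReal α σ γ T₁ T₂ a m (Srr α σ t T₁).toNNReal
  calc ∫ η, (c * Real.exp (muStar α σ γ η T₁ T₂ + a) - 1) * gauss η m (Srr α σ t T₁)
      = ∫ η, (c * Real.exp (muStar α σ γ η T₁ T₂ + a) - 1)
          ∂gaussianReal m (Srr α σ t T₁).toNNReal :=
        integral_mul_gauss_eq_integral_gaussianReal _ m hrr
    _ = c * Real.exp (muStar α σ γ m T₁ T₂ + a +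
          Bstar α σ γ T₁ T₂ ^ 2 * Srr α σ t T₁ / 2) - 1 := by
        rw [integral_sub (hint.const_mul c) (integrable_const 1), integral_const_mul,
          integral_exp_muStar_add_gaussianReal, Real.coe_toNNReal _ hrr.le, integral_const,
          probReal_univ, one_smul]
    _ = c * Real.exp (muStar α σ γ m T₁ T₂ + (1 / 2) * VC α σ γ t T₁ T₂) - 1 := by
        rw [ha, VC]
        ring_nf

theorem sofr_3M_second_stage_HW (α σ γ : ℝ → ℝ)
    (hα : Continuous α) (hσc : Continuous σ) (hγc : Continuous γ)
    (t T₁ T₂ D y : ℝ) (ht : t ≤ T₁) (h12 : T₁ < T₂)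
    (hrr : 0 < Srr α σ t T₁) (hD : 0 < D) :
    (∫ η : ℝ,
        (Real.exp (muStar α σ γ η T₁ T₂ + (1 / 2) * Szz α σ γ T₁ T₂) / D - 1) *
          gauss η (phiR α t T₁ * y) (Srr α σ t T₁))
      = Real.exp (muStar α σ γ (phiR α t T₁ * y) T₁ T₂ + (1 / 2) * VC α σ γ t T₁ T₂) / D
          - 1 := by
  simpa only [div_eq_inv_mul] using
    sofr_3M_second_stage_HW_general α σ γ t T₁ T₂ D⁻¹ y hrr
end

section
/- For every fixed t, the function v ↦ Σ_rz(t,v) is differentiable on [t,∞), satisfies Σ_rz(t,t) = 0, and solves the linear ODE ∂_v Σ_rz(t,v) = ψ_r(t,v)·Σ_rr(t,v) − α(v)·Σ_rz(t,v). -/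
open MeasureTheory Real

/-!
By the flow property `φ(u,t) φ(t,v) = φ(u,v)`, the integral `I(v) = ∫_t^v φ(u,v) f(u) du` equals
`φ(t,v) ∫_t^v φ(u,t) f(u) du`, so that the product rule and the fundamental theorem of calculus give
`I'(v) = f(v) − α(v) I(v)`. The covariance `Σ_rz` is this integral for `f = ψ Σ_rr`. Since `φ²` is
the factor of rate `2α`, `Σ_rr` is such an integral too, with `f = σ²`, and hence continuous in `v`.
-/

section Primitive

variable {E : Type*} [NormedAddCommGroup E] {f : ℝ → E}

lemma intervalIntegrable_of_locallyIntegrable (hf : LocallyIntegrable f) (a b : ℝ) :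
    IntervalIntegrable f volume a b :=
  (hf.integrableOn_isCompact isCompact_uIcc).intervalIntegrable

variable [NormedSpace ℝ E]

lemma continuous_integral_of_locallyIntegrable (hf : LocallyIntegrable f) (a : ℝ) :
    Continuous fun v => ∫ u in a..v, f u :=
  intervalIntegral.continuous_primitive (intervalIntegrable_of_locallyIntegrable hf) a

lemma hasDerivAt_integral_of_locallyIntegrable [CompleteSpace E] (hf : LocallyIntegrable f)
    (a : ℝ) {v : ℝ} (hfv : ContinuousAt f v) :
    HasDerivAt (fun w => ∫ u in a..w, f u) (f v) v :=
  intervalIntegral.integral_hasDerivAt_right (intervalIntegrable_of_locallyIntegrable hf a v)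
    hf.aestronglyMeasurable.stronglyMeasurableAtFilter hfv

end Primitive

section MeanReversionFactor

variable {α : ℝ → ℝ}

lemma phiR_self (α : ℝ → ℝ) (t : ℝ) : phiR α t t = 1 := by
  rw [phiR, intervalIntegral.integral_same, neg_zero, Real.exp_zero]

lemma phiR_mul_phiR_s15 (hα : LocallyIntegrable α) (t u v : ℝ) :
    phiR α t u * phiR α u v = phiR α t v := by
  have hint := intervalIntegrable_of_locallyIntegrable hα
  rw [phiR, phiR, phiR, ← Real.exp_add, ← neg_add,
    intervalIntegral.integral_add_adjacent_intervals (hint t u) (hint u v)]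

lemma inv_phiR (α : ℝ → ℝ) (t v : ℝ) : (phiR α t v)⁻¹ = phiR α v t := by
  rw [phiR, phiR, ← Real.exp_neg, intervalIntegral.integral_symm, neg_neg]

lemma phiR_sq (α : ℝ → ℝ) (t v : ℝ) : phiR α t v ^ 2 = phiR (fun u => 2 * α u) t v := by
  rw [phiR, phiR, intervalIntegral.integral_const_mul, ← Real.exp_nat_mul, mul_neg, Nat.cast_ofNat]

lemma continuous_phiR_right (hα : LocallyIntegrable α) (t : ℝ) : Continuous (phiR α t) :=
  Real.continuous_exp.comp (continuous_integral_of_locallyIntegrable hα t).neg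

lemma continuous_phiR_left (hα : LocallyIntegrable α) (v : ℝ) : Continuous fun t => phiR α t v := by
  simp only [← inv_phiR α v]
  exact (continuous_phiR_right hα v).inv₀ fun t => (Real.exp_pos _).ne'

lemma hasDerivAt_phiR (hα : LocallyIntegrable α) (t : ℝ) {v : ℝ} (hαv : ContinuousAt α v) :
    HasDerivAt (phiR α t) (-(α v * phiR α t v)) v :=
  (hasDerivAt_integral_of_locallyIntegrable hα t hαv).neg.exp.congr_deriv
    (by rw [mul_neg, mul_comm]; rfl)

end MeanReversionFactor

section VariationOfConstants

variable {E : Type*} [NormedAddCommGroup E] [NormedSpace ℝ E] {α : ℝ → ℝ} {f : ℝ → E}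

lemma integral_phiR_smul (hα : LocallyIntegrable α) (f : ℝ → E) (t v : ℝ) :
    ∫ u in t..v, phiR α u v • f u = phiR α t v • ∫ u in t..v, phiR α u t • f u := by
  simp only [← intervalIntegral.integral_smul, smul_smul, mul_comm (phiR α t v),
    phiR_mul_phiR_s15 hα]

lemma continuous_integral_phiR_smul (hα : LocallyIntegrable α) (hf : LocallyIntegrable f) (t : ℝ) :
    Continuous fun v => ∫ u in t..v, phiR α u v • f u := by
  simp only [integral_phiR_smul hα f t]
  exact (continuous_phiR_right hα t).smul
    (continuous_integral_of_locallyIntegrable (hf.continuous_smul (continuous_phiR_left hα t)) t)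

lemma hasDerivAt_integral_phiR_smul [CompleteSpace E] (hα : LocallyIntegrable α)
    (hf : LocallyIntegrable f) (t : ℝ) {v : ℝ} (hαv : ContinuousAt α v) (hfv : ContinuousAt f v) :
    HasDerivAt (fun w => ∫ u in t..w, phiR α u w • f u)
      (f v - α v • ∫ u in t..v, phiR α u v • f u) v := by
  have hφ : Continuous fun u => phiR α u t := continuous_phiR_left hα t
  have hprod := (hasDerivAt_phiR hα t hαv).smul
    (hasDerivAt_integral_of_locallyIntegrable (hf.continuous_smul hφ) t (hφ.continuousAt.smul hfv))
  simp only [integral_phiR_smul hα f t]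
  refine hprod.congr_deriv ?_
  rw [smul_smul, smul_smul, phiR_mul_phiR_s15 hα, phiR_self, one_smul, neg_smul, sub_eq_add_neg]

end VariationOfConstants

section Covariances

variable {α σ γ : ℝ → ℝ}

lemma Srr_eq_integral_phiR_smul (α σ : ℝ → ℝ) (t v : ℝ) :
    Srr α σ t v = ∫ u in t..v, phiR (fun s => 2 * α s) u v • σ u ^ 2 := by
  simp only [Srr, phiR_sq, smul_eq_mul]

lemma Srz_eq_integral_phiR_smul (α σ γ : ℝ → ℝ) (t v : ℝ) :
    Srz α σ γ t v = ∫ u in t..v, phiR α u v • (psiR α σ γ t u * Srr α σ t u) := by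
  simp only [Srz, smul_eq_mul, mul_assoc, mul_left_comm]

lemma continuous_Srr (hα : LocallyIntegrable α) (hσ : LocallyIntegrable fun u => σ u ^ 2) (t : ℝ) :
    Continuous (Srr α σ t) := by
  simp only [funext (Srr_eq_integral_phiR_smul α σ t)]
  exact continuous_integral_phiR_smul (hα.smul (2 : ℝ)) hσ t

lemma continuousAt_psiR (hα : LocallyIntegrable α) (hσ : LocallyIntegrable fun u => σ u ^ 2)
    (t : ℝ) {v : ℝ} (hγv : ContinuousAt γ v) : ContinuousAt (psiR α σ γ t) v :=
  ((continuousAt_const.mul (hγv.pow 2)).mul (continuous_Srr hα hσ t).continuousAt).rexp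

lemma continuous_psiR (hα : LocallyIntegrable α) (hσ : LocallyIntegrable fun u => σ u ^ 2)
    (hγ : Continuous γ) (t : ℝ) : Continuous (psiR α σ γ t) :=
  continuous_iff_continuousAt.2 fun _ => continuousAt_psiR hα hσ t hγ.continuousAt

end Covariances

theorem Srz_ode_general {α σ γ : ℝ → ℝ} (hα : LocallyIntegrable α)
    (hσ : LocallyIntegrable fun u => σ u ^ 2) (t : ℝ)
    (hψ : LocallyIntegrable (psiR α σ γ t)) :
    Srz α σ γ t t = 0 ∧
      ∀ v : ℝ, ContinuousAt α v → ContinuousAt γ v →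
        HasDerivAt (Srz α σ γ t)
          (psiR α σ γ t v * Srr α σ t v - α v * Srz α σ γ t v) v := by
  refine ⟨intervalIntegral.integral_same, fun v hαv hγv => ?_⟩
  have hSrr : Continuous (Srr α σ t) := continuous_Srr hα hσ t
  simp only [funext (Srz_eq_integral_phiR_smul α σ γ t)]
  exact hasDerivAt_integral_phiR_smul hα (hψ.smul_continuous hSrr) t hαv
    ((continuousAt_psiR hα hσ t hγv).mul hSrr.continuousAt)

theorem Srz_ode (α σ γ : ℝ → ℝ)
    (hα : Continuous α) (hσc : Continuous σ) (hγc : Continuous γ) (t : ℝ) :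
    Srz α σ γ t t = 0 ∧
      ∀ v : ℝ, t ≤ v →
        HasDerivAt (fun w => Srz α σ γ t w)
          (psiR α σ γ t v * Srr α σ t v - α v * Srz α σ γ t v) v := by
  have hα_int : LocallyIntegrable α := hα.locallyIntegrable
  have hσ_int : LocallyIntegrable fun u => σ u ^ 2 := (hσc.pow 2).locallyIntegrable
  have hψ : Continuous (psiR α σ γ t) := continuous_psiR hα_int hσ_int hγc t
  exact (Srz_ode_general hα_int hσ_int t hψ.locallyIntegrable).imp_right
    fun hode v _ => hode v hα.continuousAt hγc.continuousAt
end
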